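/- arXiv:1607.00396 — 10 statements merged into one kernel-verified Lean document; each statement's English description precedes it below -/
import Mathlib

section
/- Let λ : ℕ → ℝ be strictly increasing and let c : ℕ → ℕ → ℝ satisfy c i j = c j i and c i j ≥ 0 for all i, j. Assume that for every n ∈ ℕ the family i ↦ c i n / (λ n − λ i), indexed over the set {i : ℕ | i ≠ n}, is summable and its sum equals 0. Then c i n = 0 for all i ≠ n. -/
/-! By strong induction on `n`: once `c n i = 0` is known for all `i < n`, symmetry kills the terms
`i < n` of the `n`-th sum, and the remaining ones are nonpositive because `lam` is increasing. A
summable family of nonpositive terms with sum zero vanishes identically. -/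

/-- The abstract inductive argument underlying the vanishing of
second-order isospectral perturbations. -/
theorem stmt_0 (lam : ℕ → ℝ) (hlam : StrictMono lam)
    (c : ℕ → ℕ → ℝ)
    (hsymm : ∀ i j, c i j = c j i)
    (hnonneg : ∀ i j, 0 ≤ c i j)
    (hsummable : ∀ n : ℕ,
      Summable (fun i : {i : ℕ | i ≠ n} => c i n / (lam n - lam i)))
    (hsum : ∀ n : ℕ,
      (∑' i : {i : ℕ | i ≠ n}, c i n / (lam n - lam i)) = 0) :
    ∀ i n : ℕ, i ≠ n → c i n = 0 := by
  intro i n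
  induction n using Nat.strong_induction_on generalizing i with
  | _ n ih =>
    intro hin
    -- Indices below `n` contribute zero by induction and symmetry; those above have `lam n < lam j`.
    have hterm : ∀ j : {j : ℕ | j ≠ n}, 0 ≤ -(c j n / (lam n - lam j)) := by
      rintro ⟨j, hj⟩
      have hj' : j ≠ n := hj
      rcases lt_or_gt_of_ne hj' with h | h
      · have h0 : c j n = 0 := by rw [hsymm]; exact ih j h n hj'.symm
        simp [h0]
      · exact neg_nonneg.mpr
          (div_nonpos_of_nonneg_of_nonpos (hnonneg j n) (sub_neg.mpr (hlam h)).le)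
    have hzero : HasSum (fun j : {j : ℕ | j ≠ n} => -(c j n / (lam n - lam j))) 0 := by
      simpa [hsum n] using (hsummable n).hasSum.neg
    have hi := congrFun ((hasSum_zero_iff_of_nonneg hterm).mp hzero) ⟨i, hin⟩
    have hne : lam n - lam i ≠ 0 := sub_ne_zero.mpr (hlam.injective.ne hin.symm)
    simpa [hne] using hi
end

section
/- Let E be a complex Hilbert space with a Hilbert basis ψ : ℕ → E, let λ : ℕ → ℝ be strictly increasing, and let H₁ : E →L[ℂ] E be a continuous self-adjoint operator. Assume: (i) ⟪ψ n, H₁ (ψ n)⟫ = 0 for every n, and (ii) for every n the family i ↦ ‖⟪ψ i, H₁ (ψ n)⟫‖² / (λ n − λ i), indexed over {i : ℕ | i ≠ n}, is summable with sum equal to 0. Then H₁ = 0. -/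
/-!
Write `a i n = ‖⟪ψ i, H₁ (ψ n)⟫‖ ^ 2`, a symmetric nonnegative array with zero diagonal. The spectrum
is ordered and bounded below, which allows strong induction on `n`: if the columns `a · i` with
`i < n` vanish, then by symmetry `a i n = 0` for `i < n`, so that only the terms with `i > n` are
left in `∑ a i n / (lam n - lam i) = 0`. These are all nonpositive, since `lam n < lam i`, and a
vanishing sum of nonpositive terms has only zero terms. Hence all matrix elements of `H₁` in the
Hilbert basis vanish, and `H₁ = 0`.
-/

open scoped ComplexInnerProductSpace

/-- A self-adjoint first-order perturbation whose first- and
second-order eigenvalue corrections all vanish is zero. -/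
theorem stmt_1 {E : Type*} [NormedAddCommGroup E] [InnerProductSpace ℂ E]
    [CompleteSpace E]
    (ψ : HilbertBasis ℕ ℂ E) (lam : ℕ → ℝ) (hlam : StrictMono lam)
    (H₁ : E →L[ℂ] E) (hH₁ : IsSelfAdjoint H₁)
    (hfirst : ∀ n : ℕ, ⟪ψ n, H₁ (ψ n)⟫ = 0)
    (hsummable : ∀ n : ℕ,
      Summable (fun i : {i : ℕ | i ≠ n} =>
        ‖⟪ψ i, H₁ (ψ n)⟫‖ ^ 2 / (lam n - lam i)))
    (hsecond : ∀ n : ℕ,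
      (∑' i : {i : ℕ | i ≠ n}, ‖⟪ψ i, H₁ (ψ n)⟫‖ ^ 2 / (lam n - lam i)) = 0) :
    H₁ = 0 := by
  -- Every column of the matrix of `H₁` is zero.
  have key : ∀ n i : ℕ, ⟪ψ i, H₁ (ψ n)⟫ = 0 := by
    intro n
    induction n using Nat.strong_induction_on with
    | _ n ih =>
      have hlow : ∀ i < n, ⟪ψ i, H₁ (ψ n)⟫ = 0 := by
        intro i hi
        have hsymm : ⟪H₁ (ψ i), ψ n⟫ = ⟪ψ i, H₁ (ψ n)⟫ := hH₁.isSymmetric (ψ i) (ψ n)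
        rw [← hsymm, ← inner_conj_symm, ih i hi n, map_zero]
      have hnonneg : ∀ i : {i : ℕ | i ≠ n},
          0 ≤ -(‖⟪ψ i, H₁ (ψ n)⟫‖ ^ 2 / (lam n - lam i)) := by
        rintro ⟨i, hi⟩
        rcases lt_or_gt_of_ne hi with h | h
        · simp [hlow i h]
        · exact neg_nonneg.mpr
            (div_nonpos_of_nonneg_of_nonpos (sq_nonneg _) (sub_neg.mpr (hlam h)).le)
      have hsum : HasSum (fun i : {i : ℕ | i ≠ n} =>
          -(‖⟪ψ i, H₁ (ψ n)⟫‖ ^ 2 / (lam n - lam i))) 0 := by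
        simpa [hsecond n] using (hsummable n).hasSum.neg
      have hzero := (hasSum_zero_iff_of_nonneg hnonneg).mp hsum
      intro i
      by_cases hi : i = n
      · rw [hi]
        exact hfirst n
      · have hterm : -(‖⟪ψ i, H₁ (ψ n)⟫‖ ^ 2 / (lam n - lam i)) = 0 :=
          congrFun hzero ⟨i, hi⟩
        have hden : lam n - lam i ≠ 0 := sub_ne_zero.mpr (hlam.injective.ne (Ne.symm hi))
        simpa [hden] using hterm
  refine ContinuousLinearMap.ext_on
    (Submodule.dense_iff_topologicalClosure_eq_top.mpr ψ.dense_span) ?_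
  rintro _ ⟨n, rfl⟩
  apply ψ.repr.injective
  ext i
  simp [ψ.repr_apply_apply, key n i]
end

section
/- Let E be a complex Hilbert space with a Hilbert basis ψ : ℕ → E, let λ : ℕ → ℝ be strictly increasing, and let H₁, H₂ : E →L[ℂ] E be continuous self-adjoint operators. Assume: (i) ⟪ψ n, H₁ (ψ n)⟫ = 0 for every n; (ii) re ⟪ψ n, H₂ (ψ n)⟫ ≤ 0 for every n; and (iii) for every n the family i ↦ ‖⟪ψ i, H₁ (ψ n)⟫‖² / (λ n − λ i), indexed over {i : ℕ | i ≠ n}, is summable and its sum plus re ⟪ψ n, H₂ (ψ n)⟫ equals 0. Then H₁ = 0 and ⟪ψ n, H₂ (ψ n)⟫ = 0 for every n. -/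
/-!
Write `a i n = ⟪ψ i, H₁ (ψ n)⟫`. The second-order condition and the sign of the diagonal of `H₂` say
that `∑_{i ≠ n} ‖a i n‖² / (lam n - lam i) ≥ 0`. Terms with `i > n` are nonpositive, as `lam` is
strictly increasing. Strong induction on `n` shows that the `n`-th column of `a` vanishes
(`column_eq_zero`): if the columns `i < n` vanish, then so do the entries `a i n` with `i < n`,
by self-adjointness, so the sum at `n` is a nonnegative sum of nonpositive terms and each
of them is zero. Thus `H₁` kills every `ψ n`, and `H₁ = 0` by density of their span. Each sum is then
zero, so the diagonal of `H₂`, which is real, vanishes.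
-/

open scoped ComplexInnerProductSpace

lemma eq_zero_of_nonpos_of_tsum_nonneg {ι : Type*} {f : ι → ℝ} (hf : Summable f)
    (h : ∀ i, f i ≤ 0) (hs : 0 ≤ ∑' i, f i) (i : ι) : f i = 0 := by
  have h1 : ∑' j, -f j = 0 := by
    rw [tsum_neg]
    linarith [tsum_nonpos (L := .unconditional _) h]
  have h2 := (hf.neg.hasSum_iff.2 h1)
  have h3 := (hasSum_zero_iff_of_nonneg (fun j => neg_nonneg.2 (h j))).1 h2
  simpa using congrFun h3 i

/-- A matrix with zero diagonal and Hermitian zero pattern, all of whose second-order eigenvalue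
sums are nonnegative, is zero. The entry `a i n` has row index `i` and column index `n`. -/
lemma column_eq_zero {a : ℕ → ℕ → ℂ} {lam : ℕ → ℝ} (hlam : StrictMono lam)
    (hsymm : ∀ i n, a n i = 0 → a i n = 0) (hdiag : ∀ n, a n n = 0)
    (hsum : ∀ n, Summable (fun i : {i : ℕ | i ≠ n} => ‖a i n‖ ^ 2 / (lam n - lam i)))
    (hnonneg : ∀ n, 0 ≤ ∑' i : {i : ℕ | i ≠ n}, ‖a i n‖ ^ 2 / (lam n - lam i)) (n : ℕ) :
    ∀ i, a i n = 0 := by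
  induction n using Nat.strong_induction_on with
  | _ n ih =>
    intro i
    by_cases hi : i = n
    · rw [hi, hdiag]
    have hterm : ∀ j : {i : ℕ | i ≠ n}, ‖a j n‖ ^ 2 / (lam n - lam j) ≤ 0 := by
      rintro ⟨j, hj⟩
      rcases lt_or_gt_of_ne hj with hlt | hgt
      · simp [hsymm j n (ih j hlt n)]
      · exact div_nonpos_of_nonneg_of_nonpos (by positivity) (by linarith [hlam hgt])
    have h0 := eq_zero_of_nonpos_of_tsum_nonneg (hsum n) hterm (hnonneg n) ⟨i, hi⟩
    have hne : lam n - lam i ≠ 0 := sub_ne_zero.2 fun h => hi (hlam.injective h).symm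
    simpa [hne] using h0

/-- Vanishing of the first two orders of eigenvalue corrections
for H(t) = H₀ + tH₁ + t²H₂ with nonpositive diagonal of H₂ forces H₁ = 0 and
the diagonal of H₂ to vanish. -/
theorem stmt_2 {E : Type*} [NormedAddCommGroup E] [InnerProductSpace ℂ E]
    [CompleteSpace E]
    (ψ : HilbertBasis ℕ ℂ E) (lam : ℕ → ℝ) (hlam : StrictMono lam)
    (H₁ H₂ : E →L[ℂ] E) (hH₁ : IsSelfAdjoint H₁) (hH₂ : IsSelfAdjoint H₂)
    (hfirst : ∀ n : ℕ, ⟪ψ n, H₁ (ψ n)⟫ = 0)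
    (hdiag : ∀ n : ℕ, (⟪ψ n, H₂ (ψ n)⟫).re ≤ 0)
    (hsummable : ∀ n : ℕ,
      Summable (fun i : {i : ℕ | i ≠ n} =>
        ‖⟪ψ i, H₁ (ψ n)⟫‖ ^ 2 / (lam n - lam i)))
    (hsecond : ∀ n : ℕ,
      (∑' i : {i : ℕ | i ≠ n}, ‖⟪ψ i, H₁ (ψ n)⟫‖ ^ 2 / (lam n - lam i))
        + (⟪ψ n, H₂ (ψ n)⟫).re = 0) :
    H₁ = 0 ∧ ∀ n : ℕ, ⟪ψ n, H₂ (ψ n)⟫ = 0 := by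
  have hsymm : ∀ i n, ⟪ψ n, H₁ (ψ i)⟫ = 0 → ⟪ψ i, H₁ (ψ n)⟫ = 0 := by
    intro i n h
    have := hH₁.isSymmetric (ψ i) (ψ n)
    simp only [ContinuousLinearMap.coe_coe] at this
    rw [← this, ← inner_conj_symm, h, map_zero]
  have hcol := column_eq_zero (a := fun i n => ⟪ψ i, H₁ (ψ n)⟫) hlam hsymm hfirst hsummable
    fun n => by linarith [hsecond n, hdiag n]
  refine ⟨?_, fun n => ?_⟩
  · refine ContinuousLinearMap.ext_on (s := Set.range ψ) ?_ ?_
    · exact Submodule.dense_iff_topologicalClosure_eq_top.2 ψ.dense_span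
    · rintro _ ⟨n, rfl⟩
      apply ψ.repr.injective
      ext i
      simpa [ψ.repr_apply_apply] using hcol n i
  · apply Complex.ext
    · have h := hsecond n
      simp only [fun i => hcol n i] at h
      simpa using h
    · have := hH₂.isSymmetric (ψ n) (ψ n)
      simp only [ContinuousLinearMap.coe_coe] at this
      rw [← inner_conj_symm] at this
      simpa using Complex.conj_eq_iff_im.1 this
end

section
/- Let E be a complex Hilbert space with Hilbert basis ψ : ℕ → E, let H₀ : E →L[ℂ] E be continuous self-adjoint, and let λ : ℕ → ℝ be injective with H₀ (ψ i) = λ i • ψ i for every i. Let H₁ : E →L[ℂ] E be any continuous linear operator. Fix n, and suppose ψ₁ ∈ E and λ₁ ∈ ℂ satisfy the first-order perturbation equation H₀ ψ₁ + H₁ (ψ n) = λ n • ψ₁ + λ₁ • ψ n. Then for every i ≠ n one has ⟪ψ i, ψ₁⟫ = ⟪ψ i, H₁ (ψ n)⟫ / (λ n − λ i). -/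
/-!
Pair the perturbation equation with `ψ i`. Self-adjointness turns `⟪ψ i, H₀ ψ₁⟫` into
`lam i * ⟪ψ i, ψ₁⟫`, orthogonality kills the `μ₁` term, and injectivity of `lam` allows division
by `lam n - lam i`.
-/

open scoped ComplexInnerProductSpace

/-- Coefficients of the first-order eigenvector correction in the
unperturbed eigenbasis: ⟪ψ i, ψ₁⟫ = ⟪ψ i, H₁ ψ n⟫ / (λ n − λ i) for i ≠ n. -/
theorem stmt_4 {E : Type*} [NormedAddCommGroup E] [InnerProductSpace ℂ E]
    [CompleteSpace E]
    (ψ : HilbertBasis ℕ ℂ E)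
    (H₀ : E →L[ℂ] E) (hH₀ : IsSelfAdjoint H₀)
    (lam : ℕ → ℝ) (hlam : Function.Injective lam)
    (heig : ∀ i : ℕ, H₀ (ψ i) = (lam i : ℂ) • ψ i)
    (H₁ : E →L[ℂ] E) (n : ℕ) (ψ₁ : E) (μ₁ : ℂ)
    (hpert : H₀ ψ₁ + H₁ (ψ n) = (lam n : ℂ) • ψ₁ + μ₁ • ψ n) :
    ∀ i : ℕ, i ≠ n →
      ⟪ψ i, ψ₁⟫ = ⟪ψ i, H₁ (ψ n)⟫ / ((lam n : ℂ) - (lam i : ℂ)) := by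
  intro i hi
  have hne : (lam n : ℂ) - (lam i : ℂ) ≠ 0 :=
    sub_ne_zero.mpr fun h => hi (hlam (Complex.ofReal_injective h)).symm
  -- Self-adjointness moves `H₀` onto `ψ i`; since `lam i` is real, it is not conjugated.
  have hsymm : ⟪ψ i, H₀ ψ₁⟫ = (lam i : ℂ) * ⟪ψ i, ψ₁⟫ := by
    have hadj : ⟪H₀ (ψ i), ψ₁⟫ = ⟪ψ i, H₀ ψ₁⟫ := hH₀.isSymmetric (ψ i) ψ₁
    rw [← hadj, heig, inner_smul_left, Complex.conj_ofReal]
  have horth : ⟪ψ i, ψ n⟫ = 0 := ψ.orthonormal.2 hi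
  have key := congrArg (fun v => ⟪ψ i, v⟫) hpert
  simp only [inner_add_right, inner_smul_right, hsymm, horth] at key
  rw [eq_div_iff hne]
  linear_combination -key
end

section
/- Let E be a complex Hilbert space with Hilbert basis ψ : ℕ → E, let H₀ : E →L[ℂ] E be continuous self-adjoint, and let λ : ℕ → ℝ be injective with H₀ (ψ i) = λ i • ψ i for every i. Let H₁, H₂ : E →L[ℂ] E be any continuous linear operators. Fix n, and suppose ψ₁, ψ₂ ∈ E and λ₁, λ₂ ∈ ℂ satisfy the first-order equation H₀ ψ₁ + H₁ (ψ n) = λ n • ψ₁ + λ₁ • ψ n and the second-order equation H₀ ψ₂ + H₁ ψ₁ + H₂ (ψ n) = λ n • ψ₂ + λ₁ • ψ₁ + λ₂ • ψ n. Then the family i ↦ ⟪ψ i, H₁ (ψ n)⟫ · ⟪ψ n, H₁ (ψ i)⟫ / (λ n − λ i), indexed over {i : ℕ | i ≠ n}, is summable, and λ₂ = (Σ_{i ≠ n} ⟪ψ i, H₁ (ψ n)⟫ · ⟪ψ n, H₁ (ψ i)⟫ / (λ n − λ i)) + ⟪ψ n, H₂ (ψ n)⟫. -/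
/-!
Pairing the first-order equation with `ψ i` and using `⟪ψ i, H₀ x⟫ = λ i ⟪ψ i, x⟫` gives the
coefficients `⟪ψ i, ψ₁⟫ = ⟪ψ i, H₁ (ψ n)⟫ / (λ n - λ i)` for `i ≠ n`, and `μ₁ = ⟪ψ n, H₁ (ψ n)⟫`
for `i = n`. Pairing the second-order equation with `ψ n` gives
`μ₂ = ⟪ψ n, H₁ ψ₁⟫ - μ₁ ⟪ψ n, ψ₁⟫ + ⟪ψ n, H₂ (ψ n)⟫`. Parseval's identity
(`HilbertBasis.hasSum_inner_mul_inner`), applied to `ψ₁` and the adjoint image `H₁† (ψ n)`, expands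
`⟪ψ n, H₁ ψ₁⟫` as the sum of `⟪ψ n, H₁ (ψ i)⟫ ⟪ψ i, ψ₁⟫`, and the undetermined term `i = n` is
exactly `μ₁ ⟪ψ n, ψ₁⟫`, so it cancels. No symmetry of `H₁` or `H₂` enters, and convergence is part
of Parseval's identity.
-/

open scoped ComplexInnerProductSpace

/-- Second-order eigenvalue correction formula for a perturbation
H(t) = H₀ + tH₁ + t²H₂, with neither H₁ nor H₂ assumed self-adjoint. -/
theorem stmt_5 {E : Type*} [NormedAddCommGroup E] [InnerProductSpace ℂ E]
    [CompleteSpace E]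
    (ψ : HilbertBasis ℕ ℂ E)
    (H₀ : E →L[ℂ] E) (hH₀ : IsSelfAdjoint H₀)
    (lam : ℕ → ℝ) (hlam : Function.Injective lam)
    (heig : ∀ i : ℕ, H₀ (ψ i) = (lam i : ℂ) • ψ i)
    (H₁ H₂ : E →L[ℂ] E) (n : ℕ) (ψ₁ ψ₂ : E) (μ₁ μ₂ : ℂ)
    (hpert1 : H₀ ψ₁ + H₁ (ψ n) = (lam n : ℂ) • ψ₁ + μ₁ • ψ n)
    (hpert2 : H₀ ψ₂ + H₁ ψ₁ + H₂ (ψ n)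
      = (lam n : ℂ) • ψ₂ + μ₁ • ψ₁ + μ₂ • ψ n) :
    Summable (fun i : {i : ℕ | i ≠ n} =>
      ⟪ψ i, H₁ (ψ n)⟫ * ⟪ψ n, H₁ (ψ i)⟫ / ((lam n : ℂ) - (lam i : ℂ))) ∧
    μ₂ = (∑' i : {i : ℕ | i ≠ n},
        ⟪ψ i, H₁ (ψ n)⟫ * ⟪ψ n, H₁ (ψ i)⟫ / ((lam n : ℂ) - (lam i : ℂ)))
      + ⟪ψ n, H₂ (ψ n)⟫ := by
  have hH : ∀ (i : ℕ) (x : E), ⟪ψ i, H₀ x⟫ = (lam i : ℂ) * ⟪ψ i, x⟫ := by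
    intro i x
    have h : ⟪H₀ (ψ i), x⟫ = ⟪ψ i, H₀ x⟫ := hH₀.isSymmetric (ψ i) x
    rw [← h, heig, inner_smul_left, Complex.conj_ofReal]
  have hnn : ⟪ψ n, ψ n⟫ = (1 : ℂ) := by
    simp [inner_self_eq_norm_sq_to_K, ψ.orthonormal.1 n]
  have hμ₁ : μ₁ = ⟪ψ n, H₁ (ψ n)⟫ := by
    have h := congrArg (fun x => ⟪ψ n, x⟫) hpert1
    simp only [inner_add_right, inner_smul_right, hH, hnn] at h
    linear_combination -h
  have hcoeff : ∀ i, i ≠ n →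
      ⟪ψ i, ψ₁⟫ = ⟪ψ i, H₁ (ψ n)⟫ / ((lam n : ℂ) - (lam i : ℂ)) := by
    intro i hi
    have hne : (lam n : ℂ) - (lam i : ℂ) ≠ 0 :=
      sub_ne_zero.2 fun h => hi (hlam (Complex.ofReal_injective h)).symm
    have h := congrArg (fun x => ⟪ψ i, x⟫) hpert1
    simp only [inner_add_right, inner_smul_right, hH, ψ.orthonormal.2 hi] at h
    rw [eq_div_iff hne]
    linear_combination -h
  have hsecond : μ₂ = ⟪ψ n, H₁ ψ₁⟫ - μ₁ * ⟪ψ n, ψ₁⟫ + ⟪ψ n, H₂ (ψ n)⟫ := by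
    have h := congrArg (fun x => ⟪ψ n, x⟫) hpert2
    simp only [inner_add_right, inner_smul_right, hH, hnn] at h
    linear_combination -h
  have hparseval : HasSum (fun i => ⟪ψ n, H₁ (ψ i)⟫ * ⟪ψ i, ψ₁⟫) ⟪ψ n, H₁ ψ₁⟫ := by
    simpa only [ContinuousLinearMap.adjoint_inner_left] using
      ψ.hasSum_inner_mul_inner (ContinuousLinearMap.adjoint H₁ (ψ n)) ψ₁
  have hsum : HasSum (fun i : {i : ℕ | i ≠ n} =>
      ⟪ψ i, H₁ (ψ n)⟫ * ⟪ψ n, H₁ (ψ i)⟫ / ((lam n : ℂ) - (lam i : ℂ)))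
      (⟪ψ n, H₁ ψ₁⟫ - μ₁ * ⟪ψ n, ψ₁⟫) := by
    refine (hasSum_subtype_iff_indicator (s := {i : ℕ | i ≠ n}) (f := fun i : ℕ =>
      ⟪ψ i, H₁ (ψ n)⟫ * ⟪ψ n, H₁ (ψ i)⟫ / ((lam n : ℂ) - (lam i : ℂ)))).2 ?_
    rw [hμ₁]
    convert! hasSum_ite_sub_hasSum hparseval n using 1
    funext i
    by_cases hi : i = n
    · simp [hi]
    · rw [Set.indicator_of_mem (show i ∈ {i : ℕ | i ≠ n} from hi), if_neg hi, hcoeff i hi]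
      ring
  exact ⟨hsum.summable, by rw [hsum.tsum_eq, hsecond]⟩
end

section
/- Let E be a complex Hilbert space with Hilbert basis ψ : ℕ → E, let H₀ : E →L[ℂ] E be continuous self-adjoint, and let λ : ℕ → ℝ be injective with H₀ (ψ i) = λ i • ψ i for every i. Let F, F₂ : E →L[ℂ] E be continuous self-adjoint operators. Fix n, and suppose ψ₁, ψ₂ ∈ E and λ₁, λ₂ ∈ ℂ satisfy H₀ ψ₁ + F (H₀ (ψ n)) = λ n • ψ₁ + λ₁ • ψ n and H₀ ψ₂ + F (H₀ ψ₁) + F₂ (H₀ (ψ n)) = λ n • ψ₂ + λ₁ • ψ₁ + λ₂ • ψ n. Then the family i ↦ λ i · λ n · ‖⟪ψ i, F (ψ n)⟫‖² / (λ n − λ i), indexed over {i : ℕ | i ≠ n}, is summable, and λ₂ = (Σ_{i ≠ n} λ i · λ n · ‖⟪ψ i, F (ψ n)⟫‖² / (λ n − λ i)) + λ n · ⟪ψ n, F₂ (ψ n)⟫. -/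
/-! Expand everything in the eigenbasis. Pairing the first-order equation with `ψ i` gives
`(λ n - λ i) ⟪ψ i, ψ₁⟫ = λ n ⟪ψ i, F (ψ n)⟫` for `i ≠ n`, and `μ₁ = λ n ⟪ψ n, F (ψ n)⟫` for
`i = n`. Pairing the second-order equation with `ψ n` removes `ψ₂` and leaves
`⟪F (ψ n), H₀ ψ₁⟫ + λ n ⟪ψ n, F₂ (ψ n)⟫ = μ₁ ⟪ψ n, ψ₁⟫ + μ₂`.
By Parseval's identity `⟪F (ψ n), H₀ ψ₁⟫ = ∑ i, ⟪F (ψ n), ψ i⟫ λ i ⟪ψ i, ψ₁⟫`, which also provides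
the summability. The `n`-th term equals `μ₁ ⟪ψ n, ψ₁⟫` because `⟪ψ n, F (ψ n)⟫` is real, and the
remaining terms are those of the claimed series. -/

open scoped ComplexInnerProductSpace

/-- Second-order eigenvalue correction for the conformal-type
perturbation H(t) = (1 + tF + t²F₂)H₀. -/
theorem stmt_8 {E : Type*} [NormedAddCommGroup E] [InnerProductSpace ℂ E]
    [CompleteSpace E]
    (ψ : HilbertBasis ℕ ℂ E)
    (H₀ : E →L[ℂ] E) (hH₀ : IsSelfAdjoint H₀)
    (lam : ℕ → ℝ) (hlam : Function.Injective lam)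
    (heig : ∀ i : ℕ, H₀ (ψ i) = (lam i : ℂ) • ψ i)
    (F F₂ : E →L[ℂ] E) (hF : IsSelfAdjoint F) (hF₂ : IsSelfAdjoint F₂)
    (n : ℕ) (ψ₁ ψ₂ : E) (μ₁ μ₂ : ℂ)
    (hpert1 : H₀ ψ₁ + F (H₀ (ψ n)) = (lam n : ℂ) • ψ₁ + μ₁ • ψ n)
    (hpert2 : H₀ ψ₂ + F (H₀ ψ₁) + F₂ (H₀ (ψ n))
      = (lam n : ℂ) • ψ₂ + μ₁ • ψ₁ + μ₂ • ψ n) :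
    Summable (fun i : {i : ℕ | i ≠ n} =>
      lam i * lam n * ‖⟪ψ i, F (ψ n)⟫‖ ^ 2 / (lam n - lam i)) ∧
    μ₂ = ((∑' i : {i : ℕ | i ≠ n},
        lam i * lam n * ‖⟪ψ i, F (ψ n)⟫‖ ^ 2 / (lam n - lam i) : ℝ) : ℂ)
      + (lam n : ℂ) * ⟪ψ n, F₂ (ψ n)⟫ := by
  have sym : ∀ {T : E →L[ℂ] E}, IsSelfAdjoint T → ∀ x y : E, ⟪T x, y⟫ = ⟪x, T y⟫ :=
    fun hT x y => hT.isSymmetric x y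
  have hH : ∀ i x, ⟪ψ i, H₀ x⟫ = (lam i : ℂ) * ⟪ψ i, x⟫ := fun i x => by
    rw [← sym hH₀, heig, inner_smul_left, Complex.conj_ofReal]
  have hnn : ⟪ψ n, ψ n⟫ = 1 := by
    rw [inner_self_eq_norm_sq_to_K, ψ.orthonormal.norm_eq_one]; simp
  have e1 : ∀ i, (lam i : ℂ) * ⟪ψ i, ψ₁⟫ + lam n * ⟪ψ i, F (ψ n)⟫
      = lam n * ⟪ψ i, ψ₁⟫ + μ₁ * ⟪ψ i, ψ n⟫ := fun i => by
    have h := congrArg (fun x => ⟪ψ i, x⟫) hpert1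
    simpa only [heig, map_smul, inner_add_right, inner_smul_right, hH] using h
  have hμ₁ : μ₁ = lam n * ⟪ψ n, F (ψ n)⟫ := by
    have h := e1 n
    rw [hnn] at h
    linear_combination -h
  have e2 : ⟪F (ψ n), H₀ ψ₁⟫ + lam n * ⟪ψ n, F₂ (ψ n)⟫ = μ₁ * ⟪ψ n, ψ₁⟫ + μ₂ := by
    have h := congrArg (fun x => ⟪ψ n, x⟫) hpert2
    simp only [heig, map_smul, inner_add_right, inner_smul_right, hH, hnn] at h
    rw [sym hF]
    linear_combination h
  -- Parseval's series for `⟪F (ψ n), H₀ ψ₁⟫` with its `n`-th term replaced by zero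
  have hsum := (ψ.hasSum_inner_mul_inner (F (ψ n)) (H₀ ψ₁)).update n 0
  have hterm : ∀ i : {i : ℕ | i ≠ n}, ⟪F (ψ n), ψ i⟫ * ⟪ψ i, H₀ ψ₁⟫
      = ((lam i * lam n * ‖⟪ψ i, F (ψ n)⟫‖ ^ 2 / (lam n - lam i) : ℝ) : ℂ) := by
    rintro ⟨i, hi⟩
    have hne : (lam n : ℂ) - lam i ≠ 0 := by
      rw [sub_ne_zero, Ne, Complex.ofReal_inj]
      exact fun h => hi (hlam h).symm
    have h := e1 i
    rw [ψ.orthonormal.inner_eq_zero hi] at h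
    have hnorm := Complex.conj_mul' ⟪ψ i, F (ψ n)⟫
    rw [inner_conj_symm] at hnorm
    push_cast
    rw [hH, eq_div_iff hne, ← hnorm]
    linear_combination -(lam i : ℂ) * ⟪F (ψ n), ψ i⟫ * h
  have hind : Function.update (fun i => ⟪F (ψ n), ψ i⟫ * ⟪ψ i, H₀ ψ₁⟫) n 0
      = Set.indicator {i : ℕ | i ≠ n} (fun i => ⟪F (ψ n), ψ i⟫ * ⟪ψ i, H₀ ψ₁⟫) := by
    ext i
    by_cases h : i = n
    · subst h; simp
    · simp [h]
  rw [hind, ← hasSum_subtype_iff_indicator] at hsum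
  have hsum' := by simpa only [Function.comp_def, hterm] using hsum
  have hs : Summable (fun i : {i : ℕ | i ≠ n} =>
      lam i * lam n * ‖⟪ψ i, F (ψ n)⟫‖ ^ 2 / (lam n - lam i)) :=
    Complex.summable_ofReal.mp hsum'.summable
  refine ⟨hs, ?_⟩
  rw [Complex.ofReal_tsum, hsum'.tsum_eq, hH, sym hF (ψ n) (ψ n)]
  linear_combination -e2 - ⟪ψ n, ψ₁⟫ * hμ₁
end

section
/- Let λ : ℕ → ℝ be strictly increasing with λ 0 = 0, and let c : ℕ → ℕ → ℝ satisfy c i j = c j i and c i j ≥ 0 for all i, j. Assume that for every n the family i ↦ λ i · λ n · c i n / (λ n − λ i), indexed over {i : ℕ | i ≠ n}, is summable and its sum equals 0. Then c i j = 0 for all i, j ≥ 1 with i ≠ j. -/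
/-!
The proof is a strong induction on the column index `n`, showing `c i n = 0` for all `i ≥ 1` with
`i ≠ n`. In the vanishing sum for `n`, the term `i = 0` is zero because `lam 0 = 0`, and the terms
with `1 ≤ i < n` are zero by symmetry and the induction hypothesis for the column `i`. The remaining
terms, those with `i > n`, have nonnegative numerator and negative denominator `lam n - lam i`.
A summable family of nonpositive terms with sum zero vanishes identically, and the factors
multiplying `c i n` are nonzero.
-/

/-- Matrix-level inductive argument for the vanishing of
isospectral conformal perturbations: λ 0 = 0, λ strictly increasing, c
symmetric nonnegative, and all second-order corrections vanish, forces the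
off-diagonal matrix elements with indices ≥ 1 to vanish. -/
theorem stmt_9 (lam : ℕ → ℝ) (hlam : StrictMono lam) (hlam0 : lam 0 = 0)
    (c : ℕ → ℕ → ℝ)
    (hsymm : ∀ i j, c i j = c j i)
    (hnonneg : ∀ i j, 0 ≤ c i j)
    (hsummable : ∀ n : ℕ,
      Summable (fun i : {i : ℕ | i ≠ n} =>
        lam i * lam n * c i n / (lam n - lam i)))
    (hsum : ∀ n : ℕ,
      (∑' i : {i : ℕ | i ≠ n}, lam i * lam n * c i n / (lam n - lam i)) = 0) :
    ∀ i j : ℕ, 1 ≤ i → 1 ≤ j → i ≠ j → c i j = 0 := by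
  have hpos : ∀ i, 1 ≤ i → 0 < lam i := fun i hi => hlam0 ▸ hlam (by omega : 0 < i)
  have hlam_nonneg : ∀ i, 0 ≤ lam i := fun i => hlam0 ▸ hlam.monotone (Nat.zero_le i)
  have key : ∀ n, 1 ≤ n → ∀ i, 1 ≤ i → i ≠ n → c i n = 0 := by
    intro n
    induction n using Nat.strong_induction_on with
    | _ n ih =>
      intro hn i hi hin
      have hterm : ∀ k : {i : ℕ | i ≠ n},
          0 ≤ -(lam k * lam n * c k n / (lam n - lam k)) := by
        rintro ⟨k, hk⟩
        have hkn : k ≠ n := hk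
        rw [neg_nonneg]
        rcases Nat.lt_or_gt_of_ne hkn with hlt | hgt
        · rcases Nat.eq_zero_or_pos k with rfl | hk0
          · simp [hlam0]
          · simp [hsymm k n, ih k hlt hk0 n hn hkn.symm]
        · exact div_nonpos_of_nonneg_of_nonpos
            (mul_nonneg (mul_nonneg (hlam_nonneg k) (hlam_nonneg n)) (hnonneg k n))
            (sub_nonpos.2 (hlam hgt).le)
      have hzero : HasSum (fun k : {i : ℕ | i ≠ n} =>
          -(lam k * lam n * c k n / (lam n - lam k))) 0 := by
        have h := (hsummable n).hasSum.neg
        rwa [hsum n, neg_zero] at h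
      have hi0 := congrFun ((hasSum_zero_iff_of_nonneg hterm).1 hzero) ⟨i, hin⟩
      have hden : lam n - lam i ≠ 0 := sub_ne_zero.2 (hlam.injective.ne hin.symm)
      simpa [hden, (hpos i hi).ne', (hpos n hn).ne'] using hi0
  exact fun i j hi hj hij => key j hj i hi hij
end

section
/- Let E be a complex Hilbert space with Hilbert basis ψ : ℕ → E, let λ : ℕ → ℝ be strictly increasing with λ 0 = 0, and let F, F₂ : E →L[ℂ] E be continuous self-adjoint operators with re ⟪ψ n, F₂ (ψ n)⟫ ≤ 0 for every n. Assume: (i) λ n · ⟪ψ n, F (ψ n)⟫ = 0 for every n, and (ii) for every n the family i ↦ λ i · λ n · ‖⟪ψ i, F (ψ n)⟫‖² / (λ n − λ i), indexed over {i : ℕ | i ≠ n}, is summable and its sum plus λ n · re ⟪ψ n, F₂ (ψ n)⟫ equals 0. Then ⟪ψ i, F (ψ j)⟫ = 0 for all i, j ≥ 1, and λ n · ⟪ψ n, F₂ (ψ n)⟫ = 0 for every n. -/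
/-!
Since `re ⟪ψ n, F₂ (ψ n)⟫ ≤ 0`, the second-order condition makes the perturbation sum nonnegative
for every `n`. By strong induction on `n`, the matrix elements `⟪ψ i, F (ψ n)⟫` vanish for all
`i > n ≥ 1`: those with `1 ≤ i < n` vanish by induction and symmetry, the `i = 0` term carries the
factor `λ 0 = 0`, and the terms with `i > n` have the negative denominator `λ n - λ i`. The sum thus
has only nonpositive terms while being nonnegative, so every term is zero.
-/

open scoped ComplexInnerProductSpace

/-- Operator-theoretic core of the lemma that isospectral
conformal perturbations of the inverse metric on a surface with f⁽²⁾ ≤ 0 have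
f⁽¹⁾ = 0: vanishing of the first two orders of eigenvalue corrections for
H(t) = (1 + tF + t²F₂)H₀. -/
theorem stmt_10 {E : Type*} [NormedAddCommGroup E] [InnerProductSpace ℂ E]
    [CompleteSpace E]
    (ψ : HilbertBasis ℕ ℂ E)
    (lam : ℕ → ℝ) (hlam : StrictMono lam) (hlam0 : lam 0 = 0)
    (F F₂ : E →L[ℂ] E) (hF : IsSelfAdjoint F) (hF₂ : IsSelfAdjoint F₂)
    (hdiag : ∀ n : ℕ, (⟪ψ n, F₂ (ψ n)⟫).re ≤ 0)
    (hfirst : ∀ n : ℕ, (lam n : ℂ) * ⟪ψ n, F (ψ n)⟫ = 0)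
    (hsummable : ∀ n : ℕ,
      Summable (fun i : {i : ℕ | i ≠ n} =>
        lam i * lam n * ‖⟪ψ i, F (ψ n)⟫‖ ^ 2 / (lam n - lam i)))
    (hsecond : ∀ n : ℕ,
      (∑' i : {i : ℕ | i ≠ n},
        lam i * lam n * ‖⟪ψ i, F (ψ n)⟫‖ ^ 2 / (lam n - lam i))
        + lam n * (⟪ψ n, F₂ (ψ n)⟫).re = 0) :
    (∀ i j : ℕ, 1 ≤ i → 1 ≤ j → ⟪ψ i, F (ψ j)⟫ = 0) ∧
    (∀ n : ℕ, (lam n : ℂ) * ⟪ψ n, F₂ (ψ n)⟫ = 0) := by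
  have hpos : ∀ n : ℕ, 1 ≤ n → 0 < lam n := fun n hn => hlam0 ▸ hlam (by lia)
  have hsymm : ∀ i j : ℕ, ⟪ψ i, F (ψ j)⟫ = 0 → ⟪ψ j, F (ψ i)⟫ = 0 := by
    intro i j h
    exact (hF.isSymmetric (ψ j) (ψ i)).symm.trans (inner_eq_zero_symm.mp h)
  have hge : ∀ n : ℕ, 0 ≤ ∑' i : {i : ℕ | i ≠ n},
      lam i * lam n * ‖⟪ψ i, F (ψ n)⟫‖ ^ 2 / (lam n - lam i) := by
    intro n
    have h0 : 0 ≤ lam n := hlam0 ▸ hlam.monotone (Nat.zero_le n)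
    have := mul_nonpos_of_nonneg_of_nonpos h0 (hdiag n)
    linarith [hsecond n]
  have hupper : ∀ n : ℕ, 1 ≤ n → ∀ i : ℕ, n < i → ⟪ψ i, F (ψ n)⟫ = 0 := by
    intro n
    induction n using Nat.strong_induction_on with
    | _ n ih =>
      intro hn
      have hle : ∀ i : {i : ℕ | i ≠ n},
          lam i * lam n * ‖⟪ψ i, F (ψ n)⟫‖ ^ 2 / (lam n - lam i) ≤ 0 := by
        rintro ⟨i, hi⟩
        rcases Nat.lt_or_gt_of_ne hi with h | h
        · rcases Nat.eq_zero_or_pos i with rfl | h1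
          · simp [hlam0]
          · simp [hsymm _ _ (ih i h h1 n h)]
        · have hi0 := hpos i (by lia)
          have hn0 := hpos n hn
          exact div_nonpos_of_nonneg_of_nonpos (by positivity) (sub_nonpos.mpr (hlam h).le)
      intro i hi
      have hterm : lam i * lam n * ‖⟪ψ i, F (ψ n)⟫‖ ^ 2 / (lam n - lam i) = 0 := by
        have hz := (hasSum_zero_iff_of_nonneg (fun j => neg_nonneg.mpr (hle j))).mp (by
          have h := (hsummable n).hasSum.neg
          rwa [le_antisymm (tsum_nonpos hle) (hge n), neg_zero] at h)
        simpa only [Pi.zero_apply, neg_eq_zero] using congrFun hz ⟨i, hi.ne'⟩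
      simpa [(hpos i (by lia)).ne', (hpos n hn).ne', sub_ne_zero.mpr (hlam hi).ne] using hterm
  have hall : ∀ i j : ℕ, 1 ≤ i → 1 ≤ j → ⟪ψ i, F (ψ j)⟫ = 0 := by
    intro i j hi hj
    rcases lt_trichotomy i j with h | rfl | h
    · exact hsymm _ _ (hupper i hi j h)
    · exact (mul_eq_zero.mp (hfirst i)).resolve_left
        (Complex.ofReal_ne_zero.mpr (hpos i hi).ne')
    · exact hupper j hj i h
  refine ⟨hall, fun n => ?_⟩
  rcases Nat.eq_zero_or_pos n with rfl | hn
  · simp [hlam0]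
  have hsum : ∑' i : {i : ℕ | i ≠ n},
      lam i * lam n * ‖⟪ψ i, F (ψ n)⟫‖ ^ 2 / (lam n - lam i) = 0 := by
    refine (tsum_congr fun i => ?_).trans tsum_zero
    rcases Nat.eq_zero_or_pos (i : ℕ) with h | h
    · simp [h, hlam0]
    · simp [hall i n h hn]
  have hre := hsecond n
  rw [hsum, zero_add] at hre
  have him : (⟪ψ n, F₂ (ψ n)⟫).im = 0 := by
    rw [← Complex.conj_eq_iff_im, inner_conj_symm]
    exact hF₂.isSymmetric (ψ n) (ψ n)
  apply Complex.ext <;> simp [hre, him]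
end

section
/- Let E be a complex Hilbert space with Hilbert basis ψ : ℕ → E, let λ : ℕ → ℝ be strictly increasing with λ 0 = 0, and let F : E →L[ℂ] E be a continuous self-adjoint operator. Assume: (i) λ n · ⟪ψ n, F (ψ n)⟫ = 0 for every n, and (ii) for every n the family i ↦ λ i · λ n · ‖⟪ψ i, F (ψ n)⟫‖² / (λ n − λ i), indexed over {i : ℕ | i ≠ n}, is summable with sum equal to 0. Then for every n ≥ 1, F (ψ n) = ⟪ψ 0, F (ψ n)⟫ • ψ 0; that is, F maps every eigenvector other than the ground state to a multiple of the ground state ψ 0. -/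
/-!
Strong induction on `n` shows that `⟪ψ i, F (ψ n)⟫ = 0` for all `i, n ≥ 1`. In the second-order
sum for `ψ n`, the term `i = 0` vanishes because `λ 0 = 0`, the terms `1 ≤ i < n` vanish by the
induction hypothesis and the symmetry of `F`, and the terms `i > n` are nonpositive because
`λ n - λ i < 0`. A sum of nonpositive terms is zero only if every term is, which kills the matrix
entries with `i > n`; the diagonal entry is killed by the first-order condition. Hence `F (ψ n)`
has at most its `ψ 0`-coordinate nonzero.
-/

open scoped ComplexInnerProductSpace

/-- For a strictly first-order isospectral conformal
perturbation H(t) = (1 + tF)H₀ of a nonnegative operator with simple spectrum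
0 = λ 0 < λ 1 < …, the operator F maps every eigenvector other than the ground
state to a multiple of the ground state ψ 0. -/
theorem stmt_11 {E : Type*} [NormedAddCommGroup E] [InnerProductSpace ℂ E]
    [CompleteSpace E]
    (ψ : HilbertBasis ℕ ℂ E)
    (lam : ℕ → ℝ) (hlam : StrictMono lam) (hlam0 : lam 0 = 0)
    (F : E →L[ℂ] E) (hF : IsSelfAdjoint F)
    (hfirst : ∀ n : ℕ, (lam n : ℂ) * ⟪ψ n, F (ψ n)⟫ = 0)
    (hsummable : ∀ n : ℕ,
      Summable (fun i : {i : ℕ | i ≠ n} =>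
        lam i * lam n * ‖⟪ψ i, F (ψ n)⟫‖ ^ 2 / (lam n - lam i)))
    (hsecond : ∀ n : ℕ,
      (∑' i : {i : ℕ | i ≠ n},
        lam i * lam n * ‖⟪ψ i, F (ψ n)⟫‖ ^ 2 / (lam n - lam i)) = 0) :
    ∀ n : ℕ, 1 ≤ n → F (ψ n) = ⟪ψ 0, F (ψ n)⟫ • (ψ 0 : E) := by
  have hpos : ∀ n, 1 ≤ n → 0 < lam n := fun n hn => by
    have := hlam (show 0 < n from hn)
    rwa [hlam0] at this
  have hsym : ∀ i n, ‖⟪ψ i, F (ψ n)⟫‖ = ‖⟪ψ n, F (ψ i)⟫‖ := fun i n => by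
    rw [norm_inner_symm]
    exact congrArg norm (hF.isSymmetric (ψ n) (ψ i))
  have key : ∀ n, 1 ≤ n → ∀ i, 1 ≤ i → ⟪ψ i, F (ψ n)⟫ = 0 := by
    intro n
    induction n using Nat.strong_induction_on with
    | _ n ih =>
      intro hn i hi
      have hnonpos : ∀ j : {j : ℕ | j ≠ n},
          0 ≤ -(lam j * lam n * ‖⟪ψ j, F (ψ n)⟫‖ ^ 2 / (lam n - lam j)) := by
        rintro ⟨j, hj : j ≠ n⟩
        rcases Nat.eq_zero_or_pos j with rfl | hj0
        · simp [hlam0]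
        rcases lt_or_gt_of_ne hj with hlt | hgt
        · have h0 : ‖⟪ψ j, F (ψ n)⟫‖ = 0 := by
            rw [hsym, ih j hlt hj0 n hn, norm_zero]
          simp [h0]
        · have h1 : lam n - lam j ≤ 0 := (sub_neg.2 (hlam hgt)).le
          have h2 : 0 ≤ lam j * lam n * ‖⟪ψ j, F (ψ n)⟫‖ ^ 2 :=
            mul_nonneg (mul_pos (hpos j hj0) (hpos n hn)).le (sq_nonneg _)
          exact neg_nonneg.2 (div_nonpos_of_nonneg_of_nonpos h2 h1)
      have hsum := (hsummable n).hasSum.neg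
      rw [hsecond n, neg_zero] at hsum
      have hzero := (hasSum_zero_iff_of_nonneg hnonpos).1 hsum
      by_cases hin : i = n
      · subst hin
        exact (mul_eq_zero.1 (hfirst i)).resolve_left
          (Complex.ofReal_ne_zero.2 (hpos i hi).ne')
      · have hterm := neg_eq_zero.1 (congrFun hzero ⟨i, hin⟩)
        have hne : lam n - lam i ≠ 0 := sub_ne_zero.2 fun h => hin (hlam.injective h).symm
        have hmul := (div_eq_zero_iff.1 hterm).resolve_right hne
        have hsq := (mul_eq_zero.1 hmul).resolve_left
          (mul_pos (hpos i hi) (hpos n hn)).ne'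
        exact norm_eq_zero.1 (pow_eq_zero_iff two_ne_zero |>.1 hsq)
  intro n hn
  apply ψ.repr.injective
  ext i
  rw [ψ.repr_apply_apply, ψ.repr_apply_apply, inner_smul_right,
    orthonormal_iff_ite.1 ψ.orthonormal i 0]
  rcases Nat.eq_zero_or_pos i with rfl | hi
  · simp
  · rw [key n hn i hi, if_neg hi.ne', mul_zero]
end

section
/- Let E be a complex Hilbert space with Hilbert basis ψ : ℕ → E, let H₀ : E →L[ℂ] E be continuous self-adjoint, and let λ : ℕ → ℝ be injective with H₀ (ψ i) = λ i • ψ i for every i. Let F : E →L[ℂ] E be continuous self-adjoint. Fix n with ⟪ψ n, F (ψ n)⟫ = 0, and suppose ψ₁, ψ₂ ∈ E and λ₁, λ₂ ∈ ℂ satisfy H₀ ψ₁ − F (H₀ (ψ n)) = λ n • ψ₁ + λ₁ • ψ n and H₀ ψ₂ − F (H₀ ψ₁) + F (F (H₀ (ψ n))) = λ n • ψ₂ + λ₁ • ψ₁ + λ₂ • ψ n. Then λ₁ = 0, the family i ↦ (λ n)² · ‖⟪ψ i, F (ψ n)⟫‖² / (λ n − λ i), indexed over {i : ℕ | i ≠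 n}, is summable, and λ₂ = Σ_{i ≠ n} (λ n)² · ‖⟪ψ i, F (ψ n)⟫‖² / (λ n − λ i). -/
/-!
Write `L = lam n` and `a i = ⟪ψ i, F (ψ n)⟫`. Pairing the first-order equation with `ψ n` gives
`μ₁ = -L * a n = 0`, and pairing it with `ψ i` gives `(lam i - L) * ⟪ψ i, ψ₁⟫ = L * a i`.
The first-order equation now reads `H₀ ψ₁ = L • ψ₁ + L • F (ψ n)`; substituting this into the
second-order equation, the two occurrences of `F (F (ψ n))` cancel, and pairing with `ψ n` leaves
`μ₂ = -L * ⟪F (ψ n), ψ₁⟫`. Parseval's identity expands this inner product into the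
required series; convergence is part of Parseval, so no gap in the spectrum is needed.
-/


open scoped ComplexInnerProductSpace

/-- Second-order eigenvalue correction for the perturbation
induced by perturbing the metric itself, g = g⁽⁰⁾(1 + tf): the first-order
term is −F H₀ and the second-order term is F² H₀. -/
theorem stmt_13 {E : Type*} [NormedAddCommGroup E] [InnerProductSpace ℂ E]
    [CompleteSpace E]
    (ψ : HilbertBasis ℕ ℂ E)
    (H₀ : E →L[ℂ] E) (hH₀ : IsSelfAdjoint H₀)
    (lam : ℕ → ℝ) (hlam : Function.Injective lam)
    (heig : ∀ i : ℕ, H₀ (ψ i) = (lam i : ℂ) • ψ i)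
    (F : E →L[ℂ] E) (hF : IsSelfAdjoint F)
    (n : ℕ) (hdiag : ⟪ψ n, F (ψ n)⟫ = 0)
    (ψ₁ ψ₂ : E) (μ₁ μ₂ : ℂ)
    (hpert1 : H₀ ψ₁ - F (H₀ (ψ n)) = (lam n : ℂ) • ψ₁ + μ₁ • ψ n)
    (hpert2 : H₀ ψ₂ - F (H₀ ψ₁) + F (F (H₀ (ψ n)))
      = (lam n : ℂ) • ψ₂ + μ₁ • ψ₁ + μ₂ • ψ n) :
    μ₁ = 0 ∧
    Summable (fun i : {i : ℕ | i ≠ n} =>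
      (lam n) ^ 2 * ‖⟪ψ i, F (ψ n)⟫‖ ^ 2 / (lam n - lam i)) ∧
    μ₂ = ((∑' i : {i : ℕ | i ≠ n},
        (lam n) ^ 2 * ‖⟪ψ i, F (ψ n)⟫‖ ^ 2 / (lam n - lam i) : ℝ) : ℂ) := by
  have hnorm (i : ℕ) : ⟪ψ i, ψ i⟫ = 1 := by
    rw [inner_self_eq_norm_sq_to_K, ψ.orthonormal.1 i]; simp
  have hH (i : ℕ) (x : E) : ⟪ψ i, H₀ x⟫ = (lam i : ℂ) * ⟪ψ i, x⟫ := by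
    have h := hH₀.isSymmetric (ψ i) x
    simp only [ContinuousLinearMap.coe_coe] at h
    rw [← h, heig, inner_smul_left, Complex.conj_ofReal]
  have hFs (x y : E) : ⟪x, F y⟫ = ⟪F x, y⟫ := (hF.isSymmetric x y).symm
  rw [heig, map_smul] at hpert1
  have hμ₁ : μ₁ = 0 := by
    have h := congrArg (fun x => ⟪ψ n, x⟫) hpert1
    simp only [inner_sub_right, inner_add_right, inner_smul_right, hH, hdiag, hnorm] at h
    linear_combination -h
  subst hμ₁
  have hcoef (i : ℕ) :
      ((lam i : ℂ) - lam n) * ⟪ψ i, ψ₁⟫ = lam n * ⟪ψ i, F (ψ n)⟫ := by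
    have h := congrArg (fun x => ⟪ψ i, x⟫) hpert1
    simp only [inner_sub_right, inner_add_right, inner_smul_right, hH, zero_mul] at h
    linear_combination h
  have hH₀ψ₁ : H₀ ψ₁ = (lam n : ℂ) • ψ₁ + (lam n : ℂ) • F (ψ n) := by
    rw [zero_smul, add_zero] at hpert1
    exact sub_eq_iff_eq_add.mp hpert1
  have hμ₂ : μ₂ = -(lam n : ℂ) * ⟪F (ψ n), ψ₁⟫ := by
    have h := congrArg (fun x => ⟪ψ n, x⟫) hpert2
    simp only [hH₀ψ₁, heig, map_smul, map_add, inner_sub_right, inner_add_right,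
      inner_smul_right, hH, hnorm, zero_mul] at h
    rw [← hFs]
    linear_combination -h
  have hterm (i : ℕ) : -(lam n : ℂ) * (⟪F (ψ n), ψ i⟫ * ⟪ψ i, ψ₁⟫)
      = (((lam n) ^ 2 * ‖⟪ψ i, F (ψ n)⟫‖ ^ 2 / (lam n - lam i) : ℝ) : ℂ) := by
    by_cases hi : i = n
    · subst hi
      rw [← hFs, hdiag]; simp
    · have hne : (lam n : ℂ) - lam i ≠ 0 :=
        sub_ne_zero.mpr fun h => hi (hlam (Complex.ofReal_injective h)).symm
      have hsq : ⟪F (ψ n), ψ i⟫ * ⟪ψ i, F (ψ n)⟫ = (‖⟪ψ i, F (ψ n)⟫‖ : ℂ) ^ 2 := by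
        rw [← inner_conj_symm (F (ψ n)) (ψ i), Complex.conj_mul']
      push_cast
      rw [eq_div_iff hne]
      linear_combination (lam n : ℂ) * ⟪F (ψ n), ψ i⟫ * hcoef i + (lam n : ℂ) ^ 2 * hsq
  have hsum : HasSum (fun i : ℕ =>
      (lam n) ^ 2 * ‖⟪ψ i, F (ψ n)⟫‖ ^ 2 / (lam n - lam i)) μ₂.re := by
    have h := (ψ.hasSum_inner_mul_inner (F (ψ n)) ψ₁).mul_left (-(lam n : ℂ))
    rw [← hμ₂] at h
    simp only [hterm] at h
    exact Complex.hasSum_re h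
  have hreal : μ₂ = (μ₂.re : ℂ) := by
    have h := (ψ.hasSum_inner_mul_inner (F (ψ n)) ψ₁).mul_left (-(lam n : ℂ))
    rw [← hμ₂] at h
    simp only [hterm] at h
    exact h.unique (Complex.hasSum_ofReal.mpr hsum)
  -- The term at `n` vanishes, so restricting the series to `i ≠ n` does not change its sum.
  have hsub : HasSum (fun i : {i : ℕ | i ≠ n} =>
      (lam n) ^ 2 * ‖⟪ψ i, F (ψ n)⟫‖ ^ 2 / (lam n - lam i)) μ₂.re := by
    refine (hasSum_subtype_iff_of_support_subset (f := fun i : ℕ =>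
      (lam n) ^ 2 * ‖⟪ψ i, F (ψ n)⟫‖ ^ 2 / (lam n - lam i)) ?_).mpr hsum
    rintro i hi rfl
    exact hi (by simp)
  exact ⟨rfl, hsub.summable, by rw [hsub.tsum_eq]; exact hreal⟩
end
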